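/- Let (F,G) : (L,R) → (L',R') be a commutation datum such that F preserves coequalizers of reflexive pairs, and suppose the comparison functors R₁ and R₁' (induced by the adjunctions (L,R) and (L',R') via their Eilenberg–Moore categories) have left adjoints L₁ and L₁'. Then G lifts to a functor G₁ between the Eilenberg–Moore categories, given by G₁(B,μ) = (GB, Gμ ∘ R'ζB), satisfying U'G₁ = GU and G₁R₁ = R₁'F, and (F,G₁) : (L₁,R₁) → (L₁',R₁') is again a commutation datum. -/

import Mathlib

open CategoryTheory CategoryTheory.Limits

/-- Commutation datum: the adjunctions fit into a commutative square `R' ∘ F = G ∘ R`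
and the canonical natural transformation `ζ : L'G ⟶ FL` (determined by
`R'ζ ∘ η'G = Gη`) is an isomorphism. -/
def IsCommutationDatum
    {A B A' B' : Type*} [Category A] [Category B] [Category A'] [Category B']
    {L : B ⥤ A} {R : A ⥤ B} {L' : B' ⥤ A'} {R' : A' ⥤ B'}
    (adj : L ⊣ R) (adj' : L' ⊣ R')
    (F : A ⥤ A') (G : B ⥤ B') (e : F ⋙ R' = R ⋙ G) : Prop :=
  ∃ ζ : G ⋙ L' ⟶ L ⋙ F, IsIso ζ ∧ ∀ b : B,
    adj'.unit.app (G.obj b) ≫ R'.map (ζ.app b) ≫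
      eqToHom (Functor.congr_obj e (L.obj b)) = G.map (adj.unit.app b)

/-!
A square `θ : R'F ≅ GR` has as mate of `θ⁻¹` the canonical transformation `ζ : L'G ⟶ FL`, and
`φ = θL ∘ R'ζ` is compatible with units and multiplications, so that `G` lifts to `G₁` on algebras
and `θ` lifts to `R₁'F ≅ G₁R₁`. When `R₁` has a left adjoint `L₁`, the object `L₁(B, μ)` is the
coequalizer of the reflexive pair `Lμ, εLB : LRLB ⇉ LB`. If `ζ` is invertible, it identifies the
image under `F` of this pair with the pair presenting `L₁'G₁(B, μ)`; if moreover `F` preserves the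
coequalizer, the induced isomorphism `L₁'G₁(B, μ) ≅ FL₁(B, μ)` is the canonical transformation
of the lifted square. The two required squares are strict because an isomorphism of algebras
carried by an identity is itself an identity.
-/

section Strictness

variable {C D : Type*} [Category C] [Category D]

lemma exists_eq_eqToHom_of_f_eq {T : Monad D} {M N : T.Algebra} (f : M ⟶ N) (h : M.A = N.A)
    (hf : f.f = eqToHom h) : ∃ h' : M = N, f = eqToHom h' := by
  obtain ⟨X, a, _, _⟩ := M
  obtain ⟨Y, a', _, _⟩ := N
  obtain rfl : X = Y := h
  obtain rfl : a' = a := by simpa [hf] using f.h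
  exact ⟨rfl, Monad.Algebra.Hom.ext hf⟩

lemma exists_eq_eqToIso_of_app {P Q : C ⥤ D} (α : P ≅ Q)
    (hα : ∀ X, ∃ h : P.obj X = Q.obj X, α.hom.app X = eqToHom h) :
    ∃ h : P = Q, α = eqToIso h := by
  choose hobj happ using hα
  have hPQ : P = Q := CategoryTheory.Functor.ext hobj fun X Y f => by
    rw [eq_comm, ← Category.assoc, ← happ, ← α.hom.naturality]
    simp [happ]
  refine ⟨hPQ, ?_⟩
  ext X
  simp [happ, eqToHom_app]

end Strictness

lemma isIso_of_cofork_π_comp_eq {C : Type*} [Category C] {P Q P' Q' : C}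
    {f g : P ⟶ Q} {f' g' : P' ⟶ Q'}
    {c : Cofork f g} {c' : Cofork f' g'} (hc : IsColimit c) (hc' : IsColimit c')
    (p : P ≅ P') (q : Q ≅ Q') (hf : f ≫ q.hom = p.hom ≫ f') (hg : g ≫ q.hom = p.hom ≫ g')
    {z : c.pt ⟶ c'.pt} (hz : c.π ≫ z = q.hom ≫ c'.π) : IsIso z := by
  let w : parallelPair f g ≅ parallelPair f' g' := parallelPair.ext p q hf hg
  have : z = (hc.coconePointsIsoOfNatIso hc' w).hom :=
    Cofork.IsColimit.hom_ext hc <| hz.trans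
      (hc.comp_coconePointsIsoOfNatIso_hom hc' w WalkingParallelPair.one).symm
  rw [this]
  infer_instance

section CanonicalMate

variable {A B A' B' : Type*} [Category A] [Category B] [Category A'] [Category B']
  {L : B ⥤ A} {R : A ⥤ B} {L' : B' ⥤ A'} {R' : A' ⥤ B'}
  (adj : L ⊣ R) (adj' : L' ⊣ R') {F : A ⥤ A'} {G : B ⥤ B'} (θ : F ⋙ R' ≅ R ⋙ G)

/-- The canonical transformation `ζ : L'G ⟶ FL` attached to a square `θ : R'F ≅ GR` of right
adjoints, as the mate of `θ⁻¹`. -/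
def canonicalMate : G ⋙ L' ⟶ L ⋙ F :=
  (mateEquiv adj adj').symm (.mk _ _ _ _ θ.inv)

lemma unit_comp_map_canonicalMate (b : B) :
    adj'.unit.app (G.obj b) ≫ R'.map ((canonicalMate adj adj' θ).app b) =
      G.map (adj.unit.app b) ≫ θ.inv.app (L.obj b) :=
  (unit_mateEquiv_symm adj adj' (.mk _ _ _ _ θ.inv) b).symm

lemma unit_comp_map_canonicalMate_comp_hom (b : B) :
    adj'.unit.app (G.obj b) ≫ R'.map ((canonicalMate adj adj' θ).app b) ≫ θ.hom.app (L.obj b) =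
      G.map (adj.unit.app b) := by
  simp [reassoc_of% unit_comp_map_canonicalMate]

lemma map_hom_comp_canonicalMate_comp_map_counit (X : A) :
    L'.map (θ.hom.app X) ≫ (canonicalMate adj adj' θ).app (R.obj X) ≫ F.map (adj.counit.app X) =
      adj'.counit.app (F.obj X) := by
  have h : L'.map (θ.inv.app X) ≫ adj'.counit.app (F.obj X) =
      (canonicalMate adj adj' θ).app (R.obj X) ≫ F.map (adj.counit.app X) :=
    mateEquiv_counit_symm adj adj' (.mk _ _ _ _ θ.inv) X
  simp [← h, ← L'.map_comp_assoc]

lemma eq_canonicalMate_iff (ζ : G ⋙ L' ⟶ L ⋙ F) :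
    ζ = canonicalMate adj adj' θ ↔ ∀ b : B,
      adj'.unit.app (G.obj b) ≫ R'.map (ζ.app b) ≫ θ.hom.app (L.obj b) =
        G.map (adj.unit.app b) := by
  refine ⟨fun h b => h ▸ unit_comp_map_canonicalMate_comp_hom adj adj' θ b, fun h => ?_⟩
  ext b
  apply (adj'.homEquiv _ _).injective
  simp [adj'.homEquiv_unit, unit_comp_map_canonicalMate, ← h]

lemma homEquiv_canonicalMate_comp {b : B} {X : A} (p : L.obj b ⟶ X) :
    adj'.homEquiv _ _ ((canonicalMate adj adj' θ).app b ≫ F.map p) =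
      G.map (adj.homEquiv _ _ p) ≫ θ.inv.app X := by
  have θ_naturality := θ.inv.naturality p
  dsimp at θ_naturality
  simp [Adjunction.homEquiv_unit, reassoc_of% unit_comp_map_canonicalMate, θ_naturality]

lemma counit_comp_canonicalMate (b : B) :
    adj'.counit.app (L'.obj (G.obj b)) ≫ (canonicalMate adj adj' θ).app b =
      L'.map (R'.map ((canonicalMate adj adj' θ).app b) ≫ θ.hom.app (L.obj b)) ≫
        (canonicalMate adj adj' θ).app (R.obj (L.obj b)) ≫ F.map (adj.counit.app (L.obj b)) := by
  rw [L'.map_comp, Category.assoc, map_hom_comp_canonicalMate_comp_map_counit]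
  exact (adj'.counit.naturality _).symm

lemma isCommutationDatum_iff_isIso_canonicalMate (e : F ⋙ R' = R ⋙ G) :
    IsCommutationDatum adj adj' F G e ↔ IsIso (canonicalMate adj adj' (eqToIso e)) := by
  have h (ζ : G ⋙ L' ⟶ L ⋙ F) := eq_canonicalMate_iff adj adj' (eqToIso e) ζ
  simp only [eqToIso.hom, eqToHom_app] at h
  simp only [IsCommutationDatum, ← h, exists_eq_right]

end CanonicalMate

section LaxMonadMorphism

variable {C D : Type*} [Category C] [Category D]

/-- A lax morphism of monads `(G, φ) : T → T'` (a monad functor in the sense of Street), the datum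
along which `G` lifts to algebras; `φ : T'G ⟶ GT` points against the direction of the morphism. -/
structure LaxMonadMorphism (T : Monad C) (T' : Monad D) (G : C ⥤ D) where
  toNatTrans : G ⋙ T'.toFunctor ⟶ T.toFunctor ⋙ G
  unit_comp_app (X : C) : T'.η.app (G.obj X) ≫ toNatTrans.app X = G.map (T.η.app X)
  mul_comp_app (X : C) : T'.μ.app (G.obj X) ≫ toNatTrans.app X =
    T'.map (toNatTrans.app X) ≫ toNatTrans.app (T.obj X) ≫ G.map (T.μ.app X)

namespace LaxMonadMorphism

variable {T : Monad C} {T' : Monad D} {G : C ⥤ D} (φ : LaxMonadMorphism T T' G)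

lemma map_map_comp_app {X Y : C} (f : X ⟶ Y) :
    T'.map (G.map f) ≫ φ.toNatTrans.app Y = φ.toNatTrans.app X ≫ G.map (T.map f) :=
  φ.toNatTrans.naturality f

/-- The lift of `G` to Eilenberg–Moore categories along a lax morphism of monads `(G, φ)`, sending
`(X, a)` to `(GX, Ga ∘ φX)`. -/
@[simps]
def mapAlgebra : T.Algebra ⥤ T'.Algebra where
  obj M :=
    { A := G.obj M.A
      a := φ.toNatTrans.app M.A ≫ G.map M.a
      unit := by
        rw [← Category.assoc, φ.unit_comp_app, ← G.map_comp, M.unit]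
        exact G.map_id _
      assoc := by
        rw [← Category.assoc, φ.mul_comp_app, T'.map_comp, Category.assoc, Category.assoc,
          Category.assoc, ← G.map_comp, M.assoc, reassoc_of% φ.map_map_comp_app M.a, G.map_comp] }
  map {M N} f :=
    { f := G.map f.f
      h := by
        dsimp only
        rw [reassoc_of% φ.map_map_comp_app f.f, Category.assoc, ← G.map_comp, ← G.map_comp, f.h] }

end LaxMonadMorphism

end LaxMonadMorphism

section Lift

variable {A B A' B' : Type*} [Category A] [Category B] [Category A'] [Category B']
  {L : B ⥤ A} {R : A ⥤ B} {L' : B' ⥤ A'} {R' : A' ⥤ B'}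
  (adj : L ⊣ R) (adj' : L' ⊣ R') {F : A ⥤ A'} {G : B ⥤ B'} (θ : F ⋙ R' ≅ R ⋙ G)

/-- The transformation `θL ∘ R'ζ : R'L'G ⟶ GRL` comparing the monads of the two adjunctions
of a square `θ : R'F ≅ GR`. -/
@[simps!]
def monadSquare : G ⋙ L' ⋙ R' ⟶ (L ⋙ R) ⋙ G :=
  Functor.whiskerRight (canonicalMate adj adj' θ) R' ≫ Functor.whiskerLeft L θ.hom

lemma mul_comp_monadSquare (b : B) :
    R'.map (adj'.counit.app (L'.obj (G.obj b))) ≫ (monadSquare adj adj' θ).app b =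
      R'.map (L'.map ((monadSquare adj adj' θ).app b)) ≫
        (monadSquare adj adj' θ).app (R.obj (L.obj b)) ≫
          G.map (R.map (adj.counit.app (L.obj b))) := by
  have θ_naturality := θ.hom.naturality (adj.counit.app (L.obj b))
  have map_counit_comp := congr(R'.map $(counit_comp_canonicalMate adj adj' θ b))
  dsimp at θ_naturality
  simp only [R'.map_comp] at map_counit_comp
  simp only [monadSquare_app, Category.assoc]
  rw [reassoc_of% map_counit_comp, θ_naturality]

lemma map_monadSquare_comp_canonicalMate {b : B} (a : R.obj (L.obj b) ⟶ b) :
    L'.map ((monadSquare adj adj' θ).app b ≫ G.map a) ≫ (canonicalMate adj adj' θ).app b =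
      (L'.map ((monadSquare adj adj' θ).app b) ≫
        (canonicalMate adj adj' θ).app (R.obj (L.obj b))) ≫ F.map (L.map a) := by
  rw [L'.map_comp, Category.assoc, Category.assoc]
  exact congr(_ ≫ $((canonicalMate adj adj' θ).naturality a))

/-- The lax morphism from the monad `RL` to the monad `R'L'` over `G` induced by a square
`θ : R'F ≅ GR`. -/
def laxMonadMorphismOfSquare : LaxMonadMorphism adj.toMonad adj'.toMonad G where
  toNatTrans := monadSquare adj adj' θ
  unit_comp_app := unit_comp_map_canonicalMate_comp_hom adj adj' θ
  mul_comp_app := mul_comp_monadSquare adj adj' θ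

lemma map_hom_comp_monadSquare (X : A) :
    R'.map (L'.map (θ.hom.app X)) ≫ (monadSquare adj adj' θ).app (R.obj X) ≫
        G.map (R.map (adj.counit.app X)) =
      R'.map (adj'.counit.app (F.obj X)) ≫ θ.hom.app X := by
  have θ_naturality := θ.hom.naturality (adj.counit.app X)
  dsimp at θ_naturality
  rw [← map_hom_comp_canonicalMate_comp_map_counit adj adj' θ]
  simp [θ_naturality]

/-- The lift of a square `θ : R'F ≅ GR` to the comparison functors, `R₁'F ≅ G₁R₁`, with underlying
transformation `θ`. -/
def comparisonSquare : F ⋙ Monad.comparison adj' ≅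
    Monad.comparison adj ⋙ (laxMonadMorphismOfSquare adj adj' θ).mapAlgebra :=
  NatIso.ofComponents
    (fun X => Monad.Algebra.isoMk (θ.app X) (map_hom_comp_monadSquare adj adj' θ X))
    (fun f => Monad.Algebra.Hom.ext (θ.hom.naturality f))

end Lift

section Presentation

variable {A B : Type*} [Category A] [Category B] {L : B ⥤ A} {R : A ⥤ B} (adj : L ⊣ R)

lemma map_comp_homEquiv_symm_eq_iff {X : A} {b : B} (a : R.obj (L.obj b) ⟶ b) (f : b ⟶ R.obj X) :
    L.map a ≫ (adj.homEquiv _ _).symm f = adj.counit.app (L.obj b) ≫ (adj.homEquiv _ _).symm f ↔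
      R.map (L.map f) ≫ R.map (adj.counit.app X) = a ≫ f := by
  rw [← (adj.homEquiv _ _).symm.apply_eq_iff_eq, eq_comm]
  simp [adj.homEquiv_counit]

/-- The universal property that `L₁ M` must have: algebra morphisms from `M` to `R₁ X` are
transposes of the maps `L M ⟶ X` coequalizing the structure map and the counit. -/
def algebraHomEquiv (M : adj.toMonad.Algebra) (X : A) :
    (M ⟶ (Monad.comparison adj).obj X) ≃
      { g : L.obj M.A ⟶ X // L.map M.a ≫ g = adj.counit.app (L.obj M.A) ≫ g } where
  toFun f := ⟨(adj.homEquiv M.A X).symm f.f, (map_comp_homEquiv_symm_eq_iff adj M.a f.f).2 f.h⟩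
  invFun g :=
    { f := adj.homEquiv M.A X g.1
      h := (map_comp_homEquiv_symm_eq_iff adj M.a _).1 (by simpa using! g.2) }
  left_inv f := Monad.Algebra.Hom.ext ((adj.homEquiv M.A X).apply_symm_apply f.f)
  right_inv g := Subtype.ext ((adj.homEquiv M.A X).symm_apply_apply g.1)

lemma isReflexivePair_map_a_counit (M : adj.toMonad.Algebra) :
    IsReflexivePair (L.map M.a) (adj.counit.app (L.obj M.A)) :=
  .mk' (L.map (adj.unit.app M.A))
    ((L.map_comp _ _).symm.trans ((congrArg L.map M.unit).trans (L.map_id _)))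
    (adj.left_triangle_components _)

variable {L₁ : adj.toMonad.Algebra ⥤ A} (adj₁ : L₁ ⊣ Monad.comparison adj)

/-- The coequalizer map `LB ⟶ L₁(B, μ)` exhibiting the left adjoint `L₁` of the comparison functor
as a quotient of `L`; it is the transpose of the unit of `L₁ ⊣ R₁`. -/
def comparisonPresentation (M : adj.toMonad.Algebra) : L.obj M.A ⟶ L₁.obj M :=
  (algebraHomEquiv adj M _ (adj₁.unit.app M)).1

lemma comparisonPresentation_condition (M : adj.toMonad.Algebra) :
    L.map M.a ≫ comparisonPresentation adj adj₁ M =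
      adj.counit.app (L.obj M.A) ≫ comparisonPresentation adj adj₁ M :=
  (algebraHomEquiv adj M _ (adj₁.unit.app M)).2

lemma comparisonPresentation_comp (M : adj.toMonad.Algebra) {X : A} (k : L₁.obj M ⟶ X) :
    comparisonPresentation adj adj₁ M ≫ k = (algebraHomEquiv adj M X (adj₁.homEquiv M X k)).1 := by
  rw [adj₁.homEquiv_unit]
  exact (adj.homEquiv_naturality_right_symm _ _).symm

lemma homEquiv_comparisonPresentation_comp (M : adj.toMonad.Algebra) {X : A} (k : L₁.obj M ⟶ X) :
    adj.homEquiv M.A X (comparisonPresentation adj adj₁ M ≫ k) = (adj₁.homEquiv M X k).f := by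
  rw [comparisonPresentation_comp]
  exact (adj.homEquiv M.A X).apply_symm_apply _

/-- Any left adjoint of the comparison functor is the coequalizer in Beck's presentation; no
coequalizers are assumed to exist in `A`. -/
noncomputable def isColimitComparisonPresentation (M : adj.toMonad.Algebra) :
    IsColimit (Cofork.ofπ (comparisonPresentation adj adj₁ M)
      (comparisonPresentation_condition adj adj₁ M)) :=
  Cofork.IsColimit.ofExistsUnique fun s => by
    have h := ((adj₁.homEquiv M s.pt).trans (algebraHomEquiv adj M s.pt)).bijective.existsUnique
      ⟨s.π, s.condition⟩
    simp only [Subtype.ext_iff, Equiv.trans_apply, ← comparisonPresentation_comp] at h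
    exact h

end Presentation

section ComparisonMate

variable {A B A' B' : Type*} [Category A] [Category B] [Category A'] [Category B']
  {L : B ⥤ A} {R : A ⥤ B} {L' : B' ⥤ A'} {R' : A' ⥤ B'}
  (adj : L ⊣ R) (adj' : L' ⊣ R') {F : A ⥤ A'} {G : B ⥤ B'} (θ : F ⋙ R' ≅ R ⋙ G)
  {L₁ : adj.toMonad.Algebra ⥤ A} (adj₁ : L₁ ⊣ Monad.comparison adj)
  {L₁' : adj'.toMonad.Algebra ⥤ A'} (adj₁' : L₁' ⊣ Monad.comparison adj')

lemma comparisonPresentation_comp_canonicalMate_comparisonSquare (M : adj.toMonad.Algebra) :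
    comparisonPresentation adj' adj₁' ((laxMonadMorphismOfSquare adj adj' θ).mapAlgebra.obj M) ≫
        (canonicalMate adj₁ adj₁' (comparisonSquare adj adj' θ)).app M =
      (canonicalMate adj adj' θ).app M.A ≫ F.map (comparisonPresentation adj adj₁ M) := by
  let G₁ := (laxMonadMorphismOfSquare adj adj' θ).mapAlgebra
  let ζ₁ := canonicalMate adj₁ adj₁' (comparisonSquare adj adj' θ)
  let π := comparisonPresentation adj adj₁ M
  have unit_f : adj.homEquiv M.A (L₁.obj M) π = (adj₁.unit.app M).f := by
    rw [← adj₁.homEquiv_id, ← homEquiv_comparisonPresentation_comp, Category.comp_id]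
  have transpose_ζ₁ : (adj₁'.homEquiv (G₁.obj M) (F.obj (L₁.obj M)) (ζ₁.app M)).f =
      G.map (adj₁.unit.app M).f ≫ θ.inv.app (L₁.obj M) :=
    congr(($((adj₁'.homEquiv_unit _ _ _).trans (unit_comp_map_canonicalMate adj₁ adj₁'
      (comparisonSquare adj adj' θ) M))).f)
  apply (adj'.homEquiv (G.obj M.A) (F.obj (L₁.obj M))).injective
  rw [homEquiv_canonicalMate_comp, unit_f]
  exact (homEquiv_comparisonPresentation_comp adj' adj₁' (G₁.obj M) (ζ₁.app M)).trans transpose_ζ₁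

lemma isIso_canonicalMate_comparisonSquare [IsIso (canonicalMate adj adj' θ)]
    [∀ M : adj.toMonad.Algebra,
      PreservesColimit (parallelPair (L.map M.a) (adj.counit.app (L.obj M.A))) F] :
    IsIso (canonicalMate adj₁ adj₁' (comparisonSquare adj adj' θ)) := by
  let ζ (b : B) : L'.obj (G.obj b) ≅ F.obj (L.obj b) := (asIso (canonicalMate adj adj' θ)).app b
  let p (b : B) : L'.obj (R'.obj (L'.obj (G.obj b))) ≅ F.obj (L.obj (R.obj (L.obj b))) :=
    L'.mapIso (R'.mapIso (ζ b) ≪≫ θ.app (L.obj b)) ≪≫ ζ (R.obj (L.obj b))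
  let G₁ := (laxMonadMorphismOfSquare adj adj' θ).mapAlgebra
  have (M : adj.toMonad.Algebra) :
      IsIso ((canonicalMate adj₁ adj₁' (comparisonSquare adj adj' θ)).app M) :=
    isIso_of_cofork_π_comp_eq
      (isColimitComparisonPresentation adj' adj₁' (G₁.obj M))
      (isColimitCoforkMapOfIsColimit F _ (isColimitComparisonPresentation adj adj₁ M))
      (p M.A) (ζ M.A)
      (map_monadSquare_comp_canonicalMate adj adj' θ M.a)
      ((counit_comp_canonicalMate adj adj' θ M.A).trans (Category.assoc _ _ _).symm)
      (comparisonPresentation_comp_canonicalMate_comparisonSquare adj adj' θ adj₁ adj₁' M)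
  exact NatIso.isIso_of_isIso_app _

end ComparisonMate

/-- Let `(F,G) : (L,R) → (L',R')` be a commutation datum (with canonical
isomorphism `ζ`) such that `F` preserves coequalizers of reflexive pairs, and suppose the
comparison functors `R₁ = Monad.comparison adj` and `R₁' = Monad.comparison adj'` have
left adjoints `L₁` and `L₁'`.  Then `G` lifts to a functor `G₁` between the
Eilenberg–Moore categories, given on objects by `G₁(B,μ) = (GB, Gμ ∘ R'ζB)` and on
morphisms by `G₁ f = G f`, satisfying `U' ∘ G₁ = G ∘ U` and `G₁ ∘ R₁ = R₁' ∘ F`, and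
`(F,G₁) : (L₁,R₁) → (L₁',R₁')` is again a commutation datum. -/
theorem commutation_datum_lifts_to_EilenbergMoore
    {A B A' B' : Type*} [Category A] [Category B] [Category A'] [Category B']
    {L : B ⥤ A} {R : A ⥤ B} {L' : B' ⥤ A'} {R' : A' ⥤ B'}
    (adj : L ⊣ R) (adj' : L' ⊣ R')
    (F : A ⥤ A') (G : B ⥤ B') (e : F ⋙ R' = R ⋙ G)
    (ζ : G ⋙ L' ⟶ L ⋙ F) (hζiso : IsIso ζ)
    (hζ : ∀ b : B, adj'.unit.app (G.obj b) ≫ R'.map (ζ.app b) ≫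
        eqToHom (Functor.congr_obj e (L.obj b)) = G.map (adj.unit.app b))
    (hF : ∀ {X Y : A} (f g : X ⟶ Y), IsReflexivePair f g →
        Nonempty (PreservesColimit (parallelPair f g) F))
    (L₁ : adj.toMonad.Algebra ⥤ A) (adj₁ : L₁ ⊣ Monad.comparison adj)
    (L₁' : adj'.toMonad.Algebra ⥤ A') (adj₁' : L₁' ⊣ Monad.comparison adj') :
    ∃ (G₁ : adj.toMonad.Algebra ⥤ adj'.toMonad.Algebra)
      (hcomm : G₁ ⋙ adj'.toMonad.forget = adj.toMonad.forget ⋙ G)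
      (hcomp : F ⋙ Monad.comparison adj' = Monad.comparison adj ⋙ G₁),
      (∀ M : adj.toMonad.Algebra,
        adj'.toMonad.toFunctor.map (eqToHom (Functor.congr_obj hcomm M)) ≫
            R'.map (ζ.app M.A) ≫ eqToHom (Functor.congr_obj e (L.obj M.A)) ≫
            G.map M.a
          = (G₁.obj M).a ≫ eqToHom (Functor.congr_obj hcomm M)) ∧
      (∀ {M N : adj.toMonad.Algebra} (f : M ⟶ N),
        (G₁.map f).f ≫ eqToHom (Functor.congr_obj hcomm N)
          = eqToHom (Functor.congr_obj hcomm M) ≫ G.map f.f) ∧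
      IsCommutationDatum adj₁ adj₁' F G₁ hcomp := by
  obtain rfl : ζ = canonicalMate adj adj' (eqToIso e) :=
    (eq_canonicalMate_iff adj adj' (eqToIso e) ζ).2 (by simpa [eqToHom_app] using hζ)
  have (M : adj.toMonad.Algebra) :
      PreservesColimit (parallelPair (L.map M.a) (adj.counit.app (L.obj M.A))) F :=
    (hF _ _ (isReflexivePair_map_a_counit adj M)).some
  obtain ⟨hcomp, h⟩ := exists_eq_eqToIso_of_app (comparisonSquare adj adj' (eqToIso e)) fun X =>
    exists_eq_eqToHom_of_f_eq _ (Functor.congr_obj e X) (eqToHom_app e X)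
  refine ⟨(laxMonadMorphismOfSquare adj adj' (eqToIso e)).mapAlgebra, rfl, hcomp,
    fun M => ?_, fun f => ?_, ?_⟩
  · change R'.map (L'.map (𝟙 (G.obj M.A))) ≫ _ =
      ((monadSquare adj adj' (eqToIso e)).app M.A ≫ G.map M.a) ≫ 𝟙 _
    rw [monadSquare_app, eqToIso.hom, eqToHom_app, Category.comp_id, Category.assoc, L'.map_id,
      R'.map_id]
    exact Category.id_comp _
  · exact (Category.comp_id _).trans (Category.id_comp _).symm
  · rw [isCommutationDatum_iff_isIso_canonicalMate, ← h]
    exact isIso_canonicalMate_comparisonSquare adj adj' (eqToIso e) adj₁ adj₁'
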